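/- Let $P = a_0 + a_1X + \dots + a_nX^n \in \mathbb{R}[X]$ be a real polynomial of degree $n \ge 1$ (so $a_n \neq 0$) and let $\tilde P = X^n P(1/X) = a_n + a_{n-1}X + \dots + a_0X^n$ be its reversed polynomial. Put $Q = n\,P\,P'' + (1-n)\,(P')^2 \in \mathbb{R}[X]$. Then $$ n\,\tilde P\,\tilde P'' + (1-n)\,(\tilde P')^2 = X^{2(n-2)}\, Q(1/X) $$ as an identity of Laurent polynomials in $\mathbb{R}[X,X^{-1}]$. If moreover $P > 0$ on $(0,\infty)$, then for every $x > 0$ the second derivative of $\tilde P^{1/n}$ at $x$ and the second derivative of $P^{1/n}$ at $1/x$ have the same sign (positive, zero or negative). Finally, $P$ is $\frac1n$-concave on $(0,\infty)$ if and only if $\tilde P$ is, where a function $u$ is called $\mu$-concave on $(0,\infty)$ (for $\mu > 0$) if $u > 0$ on $(0,\infty)$ and $u^\mu$ is concave on $(0,\infty)$; in particular this equivalence applies to $P$ with non-negative coefficients, for which the positivity of $P$ and of $\tilde P$ on $(0,\infty)$ is automatic. -/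

import Mathlib

/-!
Reversal sends `P` to `P̃(x) = xⁿ P(1/x)`, so `P̃^(1/n)(x) = x f(1/x)` with `f = P^(1/n)`. The
operation `f ↦ x f(1/x)` preserves concavity on `(0, ∞)`, since `x f(1/x)` is the perspective
`t f(s / t)` of `f` on the line `s = 1`, and it satisfies `(x f(1/x))'' = x⁻³ f''(1/x)`.

For the algebraic identity, differentiating the reversal of `P` gives the reversal of the polar
derivative `P₁ = n P - X P'`, which lowers the formal degree `n` by one. Doing this twice turns the
identity into `n P ((n-1) P₁ - X P₁') + (1-n) P₁² = X² (n P P'' + (1-n) P'²)` in `ℝ[X]`.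
-/

/-- `u` is `μ`-concave on `s`: `u` is positive on `s` and `u ^ μ` is concave on `s`.
(On an open `s` and for `μ > 0` this forces `u` to be continuous on `s`.) -/
def MuConcaveOn (s : Set ℝ) (μ : ℝ) (u : ℝ → ℝ) : Prop :=
  (∀ x ∈ s, 0 < u x) ∧ ConcaveOn ℝ s (fun x => u x ^ μ)

open Polynomial Set

section Algebra

open LaurentPolynomial (T invert)
open scoped LaurentPolynomial

variable {R : Type*} [CommRing R]

/-- The polar derivative at the origin of a polynomial `p` of formal degree `n`, i.e. `∂F/∂Y` at
`Y = 1` for the homogenization `F(X, Y) = Yⁿ p(X / Y)`. The formal degree is a ring element, so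
that `n - 1` is meaningful for `n = 0`. -/
noncomputable def polarDerivative (n : R) (p : R[X]) : R[X] :=
  C n * p - X * derivative p

/-- The Hessian covariant of a polynomial of formal degree `n`, i.e. `1 / (n - 1)` times the
Hessian determinant of its homogenization, evaluated at `Y = 1`. -/
noncomputable def hessianCovariant (n : R) (p : R[X]) : R[X] :=
  C n * (p * derivative (derivative p)) + C (1 - n) * derivative p ^ 2

theorem coeff_polarDerivative (n : R) (p : R[X]) (k : ℕ) :
    (polarDerivative n p).coeff k = (n - k) * p.coeff k := by
  cases k with
  | zero => simp [polarDerivative]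
  | succ k =>
    simp only [polarDerivative, coeff_sub, coeff_C_mul, coeff_X_mul, coeff_derivative]
    push_cast
    ring

theorem natDegree_polarDerivative_le {N : ℕ} {p : R[X]} (hp : p.natDegree ≤ N + 1) :
    (polarDerivative ((N + 1 : ℕ) : R) p).natDegree ≤ N := by
  refine natDegree_le_iff_coeff_eq_zero.mpr fun k hk => ?_
  rw [coeff_polarDerivative]
  obtain rfl | hk' := (Nat.succ_le_of_lt hk).eq_or_lt
  · simp
  · rw [coeff_eq_zero_of_natDegree_lt (hp.trans_lt hk'), mul_zero]

theorem derivative_reflect_succ {N : ℕ} {p : R[X]} (hp : p.natDegree ≤ N + 1) :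
    derivative (reflect (N + 1) p) = reflect N (polarDerivative ((N + 1 : ℕ) : R) p) := by
  ext k
  rw [coeff_derivative, coeff_reflect, coeff_reflect]
  obtain hk | hk := le_or_gt k N
  · rw [revAt_le hk, revAt_le (Nat.succ_le_succ hk), Nat.succ_sub_succ,
      coeff_polarDerivative, Nat.cast_sub hk]
    push_cast
    ring
  · rw [revAt_eq_self_of_lt hk, revAt_eq_self_of_lt (Nat.succ_lt_succ hk),
      coeff_eq_zero_of_natDegree_lt (hp.trans_lt (Nat.succ_lt_succ hk)),
      coeff_eq_zero_of_natDegree_lt ((natDegree_polarDerivative_le hp).trans_lt hk), zero_mul]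

theorem toLaurent_reflect {N : ℕ} {p : R[X]} (hp : p.natDegree ≤ N) :
    toLaurent (reflect N p) = T N * invert (toLaurent p) := by
  have h : reflect N p = p.reverse * X ^ (N - p.natDegree) := by
    simpa [Nat.add_sub_cancel' hp, reverse] using
      reflect_mul p 1 le_rfl (natDegree_one.trans_le (Nat.zero_le (N - p.natDegree)))
  rw [h, map_mul, LaurentPolynomial.toLaurent_reverse, toLaurent_X_pow, mul_assoc,
    ← LaurentPolynomial.T_add, ← Nat.cast_add, Nat.add_sub_cancel' hp, mul_comm]

theorem toLaurent_derivative_reflect {N : ℕ} {p : R[X]} (hp : p.natDegree ≤ N) :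
    toLaurent (derivative (reflect N p))
      = T ((N : ℤ) - 1) * invert (toLaurent (polarDerivative (N : R) p)) := by
  cases N with
  | zero =>
    rw [eq_C_of_natDegree_le_zero hp]
    simp [polarDerivative]
  | succ N =>
    rw [derivative_reflect_succ hp, toLaurent_reflect (natDegree_polarDerivative_le hp),
      Nat.cast_succ N (R := ℤ), add_sub_cancel_right]

theorem toLaurent_derivative_derivative_reflect {N : ℕ} {p : R[X]} (hp : p.natDegree ≤ N) :
    toLaurent (derivative (derivative (reflect N p)))
      = T ((N : ℤ) - 2)
        * invert (toLaurent (polarDerivative ((N : R) - 1) (polarDerivative (N : R) p))) := by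
  cases N with
  | zero =>
    rw [eq_C_of_natDegree_le_zero hp]
    simp [polarDerivative]
  | succ N =>
    rw [derivative_reflect_succ hp,
      toLaurent_derivative_reflect (natDegree_polarDerivative_le hp)]
    congr 2
    · push_cast
      ring
    · simp

theorem hessianCovariant_eq_polarDerivative (n : R) (p : R[X]) :
    C n * (p * polarDerivative (n - 1) (polarDerivative n p))
        + C (1 - n) * polarDerivative n p ^ 2
      = X ^ 2 * hessianCovariant n p := by
  simp only [polarDerivative, hessianCovariant, derivative_sub, derivative_mul, derivative_C,
    derivative_X, C_sub, C_1]
  ring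

theorem toLaurent_hessianCovariant_reflect {N : ℕ} {p : R[X]} (hp : p.natDegree ≤ N) :
    toLaurent (hessianCovariant (N : R) (reflect N p))
      = T (2 * ((N : ℤ) - 2)) * invert (toLaurent (hessianCovariant (N : R) p)) := by
  have hT_mul : (T N * T ((N : ℤ) - 2) : R[T;T⁻¹]) = T (2 * ((N : ℤ) - 1)) := by
    rw [← LaurentPolynomial.T_add]; ring_nf
  have hT_sq : (T ((N : ℤ) - 1) ^ 2 : R[T;T⁻¹]) = T (2 * ((N : ℤ) - 1)) :=
    LaurentPolynomial.T_pow _ _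
  set q := polarDerivative (N : R) p
  set r := polarDerivative ((N : R) - 1) q
  calc toLaurent (hessianCovariant (N : R) (reflect N p))
      = T (2 * ((N : ℤ) - 1))
          * invert (toLaurent (C (N : R) * (p * r) + C (1 - (N : R)) * q ^ 2)) := by
        rw [hessianCovariant]
        simp only [map_add, map_mul, map_pow, toLaurent_reflect hp,
          toLaurent_derivative_reflect hp, toLaurent_derivative_derivative_reflect hp,
          toLaurent_C, LaurentPolynomial.invert_C]
        linear_combination
          (LaurentPolynomial.C (N : R) * invert (toLaurent p) * invert (toLaurent r)) * hT_mul
          + (LaurentPolynomial.C (1 - (N : R)) * invert (toLaurent q) ^ 2) * hT_sq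
    _ = T (2 * ((N : ℤ) - 1)) * invert (toLaurent (X ^ 2 * hessianCovariant (N : R) p)) := by
        rw [hessianCovariant_eq_polarDerivative]
    _ = T (2 * ((N : ℤ) - 2)) * invert (toLaurent (hessianCovariant (N : R) p)) := by
        rw [map_mul, map_mul, toLaurent_X_pow, LaurentPolynomial.invert_T, ← mul_assoc,
          ← LaurentPolynomial.T_add]
        ring_nf

end Algebra

theorem concaveOn_smul_comp_inv {𝕜 E : Type*} [Field 𝕜] [LinearOrder 𝕜] [IsStrictOrderedRing 𝕜]
    [AddCommGroup E] [PartialOrder E] [Module 𝕜 E] [PosSMulMono 𝕜 E] {f : 𝕜 → E}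
    (hf : ConcaveOn 𝕜 (Ioi 0) f) : ConcaveOn 𝕜 (Ioi 0) fun x => x • f x⁻¹ := by
  refine ⟨convex_Ioi 0, fun x (hx : 0 < x) y (hy : 0 < y) a b ha hb hab => ?_⟩
  simp only [smul_eq_mul]
  set z := a * x + b * y
  have hz : 0 < z := convex_Ioi (0 : 𝕜) hx hy ha hb hab
  have weights_sum : a * x / z + b * y / z = 1 := by rw [← add_div, div_self hz.ne']
  have combination : a * x / z * x⁻¹ + b * y / z * y⁻¹ = z⁻¹ := by
    field_simp
    exact hab
  have concave := hf.2 (inv_pos.mpr hx) (inv_pos.mpr hy) (div_nonneg (mul_nonneg ha hx.le) hz.le)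
    (div_nonneg (mul_nonneg hb hy.le) hz.le) weights_sum
  rw [smul_eq_mul, smul_eq_mul, combination] at concave
  calc a • x • f x⁻¹ + b • y • f y⁻¹
      = z • ((a * x / z) • f x⁻¹ + (b * y / z) • f y⁻¹) := by
        simp only [smul_add, smul_smul, mul_div_cancel₀ _ hz.ne']
    _ ≤ z • f z⁻¹ := smul_le_smul_of_nonneg_left concave hz.le

section Calculus

variable {𝕜 F : Type*} [NontriviallyNormedField 𝕜] [NormedAddCommGroup F] [NormedSpace 𝕜 F]

theorem hasDerivAt_comp_inv {f : 𝕜 → F} {f' : F} {x : 𝕜} (hx : x ≠ 0) (hf : HasDerivAt f f' x⁻¹) :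
    HasDerivAt (fun t => f t⁻¹) (-(x⁻¹ ^ 2 • f')) x := by
  simpa [Function.comp_def] using hf.scomp x (hasDerivAt_inv hx)

theorem hasDerivAt_smul_comp_inv {f : 𝕜 → F} {f' : F} {x : 𝕜} (hx : x ≠ 0)
    (hf : HasDerivAt f f' x⁻¹) : HasDerivAt (fun t => t • f t⁻¹) (f x⁻¹ - x⁻¹ • f') x := by
  refine ((hasDerivAt_id x).smul (hasDerivAt_comp_inv hx hf)).congr_deriv ?_
  simp only [id, one_smul, smul_neg, smul_smul]
  rw [show x * x⁻¹ ^ 2 = x⁻¹ by field_simp, neg_add_eq_sub]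

theorem iteratedDeriv_two_smul_comp_inv {f : 𝕜 → F} {x : 𝕜} (hx : x ≠ 0)
    (hf : ContDiffAt 𝕜 2 f x⁻¹) :
    iteratedDeriv 2 (fun t => t • f t⁻¹) x = x⁻¹ ^ 3 • iteratedDeriv 2 f x⁻¹ := by
  have first_deriv : deriv (fun t => t • f t⁻¹) =ᶠ[nhds x] fun t => f t⁻¹ - t⁻¹ • deriv f t⁻¹ := by
    filter_upwards [(continuousAt_inv₀ hx).eventually (hf.eventually (by simp)),
      eventually_ne_nhds hx] with t hft ht
    exact (hasDerivAt_smul_comp_inv ht (hft.differentiableAt two_ne_zero).hasDerivAt).deriv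
  have hf₁ : HasDerivAt f (deriv f x⁻¹) x⁻¹ := (hf.differentiableAt two_ne_zero).hasDerivAt
  have hf₂ : HasDerivAt (deriv f) (deriv (deriv f) x⁻¹) x⁻¹ :=
    ((hf.derivWithin (m := 1) le_rfl).differentiableAt one_ne_zero).hasDerivAt
  have second_deriv := (hasDerivAt_comp_inv hx hf₁).sub
    ((hasDerivAt_inv hx).smul (hasDerivAt_comp_inv hx hf₂))
  simp only [iteratedDeriv_succ, iteratedDeriv_zero]
  rw [first_deriv.deriv_eq]
  refine second_deriv.deriv.trans ?_
  module

end Calculus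

theorem eval_reflect {K : Type*} [Field K] {N : ℕ} {p : K[X]} (hp : p.natDegree ≤ N) {x : K}
    (hx : x ≠ 0) : (reflect N p).eval x = x ^ N * p.eval x⁻¹ := by
  let _ := invertibleOfNonzero (inv_ne_zero hx)
  have h : (reflect N p).eval x * x⁻¹ ^ N = p.eval x⁻¹ := by
    simpa using eval₂_reflect_mul_pow (RingHom.id K) x⁻¹ N p hp
  rw [← h, mul_left_comm, ← mul_pow, mul_inv_cancel₀ hx, one_pow, mul_one]

section Real

variable {n : ℕ} {P : ℝ[X]}

theorem eval_reflect_pos (hP : P.natDegree ≤ n) {x : ℝ} (hx : 0 < x) (hPx : 0 < P.eval x⁻¹) :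
    0 < (reflect n P).eval x := by
  rw [eval_reflect hP hx.ne']
  positivity

theorem eval_reflect_rpow_inv (hn : n ≠ 0) (hP : P.natDegree ≤ n) {x : ℝ} (hx : 0 < x)
    (hPx : 0 ≤ P.eval x⁻¹) :
    (reflect n P).eval x ^ (n : ℝ)⁻¹ = x * P.eval x⁻¹ ^ (n : ℝ)⁻¹ := by
  rw [eval_reflect hP hx.ne', Real.mul_rpow (by positivity) hPx,
    Real.pow_rpow_inv_natCast hx.le hn]

theorem iteratedDeriv_two_eval_reflect_rpow_inv (hn : n ≠ 0) (hP : P.natDegree ≤ n) {x : ℝ}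
    (hx : 0 < x) (hPx : 0 < P.eval x⁻¹) :
    iteratedDeriv 2 (fun t => (reflect n P).eval t ^ (n : ℝ)⁻¹) x
      = x⁻¹ ^ 3 * iteratedDeriv 2 (fun t => P.eval t ^ (n : ℝ)⁻¹) x⁻¹ := by
  have eventually_pos : ∀ᶠ t in nhds x, 0 < P.eval t⁻¹ :=
    (P.continuous.continuousAt.comp (continuousAt_inv₀ hx.ne')).eventually (lt_mem_nhds hPx)
  have smooth : ContDiffAt ℝ 2 (fun t => P.eval t ^ (n : ℝ)⁻¹) x⁻¹ :=
    (P.contDiff_aeval 2).contDiffAt.rpow_const_of_ne hPx.ne'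
  refine Eq.trans (Filter.EventuallyEq.iteratedDeriv_eq 2 ?_)
    (iteratedDeriv_two_smul_comp_inv hx.ne' smooth)
  filter_upwards [eventually_pos, lt_mem_nhds hx] with t hPt ht
  exact eval_reflect_rpow_inv hn hP ht hPt.le

theorem MuConcaveOn.eval_reflect (hn : n ≠ 0) (hP : P.natDegree ≤ n)
    (h : MuConcaveOn (Ioi 0) (n : ℝ)⁻¹ P.eval) :
    MuConcaveOn (Ioi 0) (n : ℝ)⁻¹ (reflect n P).eval := by
  have hpos : ∀ x ∈ Ioi (0 : ℝ), 0 < P.eval x⁻¹ := fun x hx => h.1 _ (inv_pos.mpr (mem_Ioi.mp hx))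
  exact ⟨fun x hx => eval_reflect_pos hP hx (hpos x hx), (concaveOn_smul_comp_inv h.2).congr
    fun x hx => (eval_reflect_rpow_inv hn hP hx (hpos x hx).le).symm⟩

theorem muConcaveOn_eval_reflect_iff (hn : n ≠ 0) (hP : P.natDegree ≤ n) :
    MuConcaveOn (Ioi 0) (n : ℝ)⁻¹ (reflect n P).eval ↔
      MuConcaveOn (Ioi 0) (n : ℝ)⁻¹ P.eval := by
  refine ⟨fun h => ?_, MuConcaveOn.eval_reflect hn hP⟩
  simpa only [reflect_reflect] using
    h.eval_reflect hn (natDegree_reflect_le.trans (max_le le_rfl hP))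

end Real

theorem stmt4_general (P : ℝ[X]) {n : ℕ} (hn : n ≠ 0) (hP : P.natDegree ≤ n) :
    (toLaurent (hessianCovariant (n : ℝ) (reflect n P))
      = LaurentPolynomial.T (2 * ((n : ℤ) - 2)) *
        LaurentPolynomial.invert (toLaurent (hessianCovariant (n : ℝ) P)))
    ∧ ((∀ x : ℝ, 0 < x → 0 < P.eval x) → ∀ x : ℝ, 0 < x →
        SignType.sign (iteratedDeriv 2 (fun t => (reflect n P).eval t ^ (1 / (n : ℝ))) x)
          = SignType.sign (iteratedDeriv 2 (fun t => P.eval t ^ (1 / (n : ℝ))) (1 / x)))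
    ∧ (MuConcaveOn (Ioi 0) (1 / (n : ℝ)) P.eval ↔
        MuConcaveOn (Ioi 0) (1 / (n : ℝ)) (reflect n P).eval) := by
  simp only [one_div]
  refine ⟨toLaurent_hessianCovariant_reflect hP, fun hpos x hx => ?_,
    (muConcaveOn_eval_reflect_iff hn hP).symm⟩
  rw [iteratedDeriv_two_eval_reflect_rpow_inv hn hP hx (hpos _ (inv_pos.mpr hx)), sign_mul,
    sign_pos (pow_pos (inv_pos.mpr hx) 3), one_mul]

open Polynomial in
theorem stmt4 (P : Polynomial ℝ) (n : ℕ) (hn : 1 ≤ n) (hdeg : P.natDegree = n) :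
    -- the identity in `ℝ[X, X⁻¹]`; `LaurentPolynomial.invert` is the substitution `X ↦ 1/X`
    (toLaurent (C (n : ℝ) * (P.reverse * derivative (derivative P.reverse))
          + C (1 - (n : ℝ)) * (derivative P.reverse) ^ 2)
      = LaurentPolynomial.T (2 * ((n : ℤ) - 2)) *
        LaurentPolynomial.invert (toLaurent
          (C (n : ℝ) * (P * derivative (derivative P)) + C (1 - (n : ℝ)) * (derivative P) ^ 2)))
    ∧ ((∀ x : ℝ, 0 < x → 0 < P.eval x) → ∀ x : ℝ, 0 < x →
        SignType.sign (iteratedDeriv 2 (fun t : ℝ => P.reverse.eval t ^ (1 / (n : ℝ))) x)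
          = SignType.sign (iteratedDeriv 2 (fun t : ℝ => P.eval t ^ (1 / (n : ℝ))) (1 / x)))
    ∧ (MuConcaveOn (Set.Ioi 0) (1 / (n : ℝ)) (fun x => P.eval x) ↔
        MuConcaveOn (Set.Ioi 0) (1 / (n : ℝ)) (fun x => P.reverse.eval x)) := by
  subst hdeg
  exact stmt4_general P (Nat.one_le_iff_ne_zero.mp hn) le_rfl
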